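/- arXiv:0909.2264 — 8 statements merged into one kernel-verified Lean document; each statement's English description precedes it below -/
import Mathlib

section
/- Let M be a finite matroid of rank r on ground set E. For all assignments of commuting variables x = (x_e)_{e∈E}, y = (y_e)_{e∈E} and λ, ξ (equivalently, for all elements of any commutative ring), SC(M; (x_e·y_e)_{e∈E}, λ·ξ) = ∑_{T ⊆ E} λ^{r − rk(T)} · (∏_{e∈T} (−y_e)) · SC(M|T; (−x_e)_{e∈T}, λ) · SC(M/T; (y_e)_{e∈E∖T}, ξ). -/
open Finset

/-- A finite matroid on ground set `E`, given by its rank function on finsets,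
satisfying the standard rank axioms: the rank of a set is at most its cardinality,
rank is monotone, and rank is submodular. -/
structure FinMatroid (α : Type*) [DecidableEq α] where
  E : Finset α
  rk : Finset α → ℕ
  rk_le_card : ∀ A ⊆ E, rk A ≤ A.card
  rk_mono : ∀ ⦃A B : Finset α⦄, A ⊆ B → B ⊆ E → rk A ≤ rk B
  rk_submod : ∀ ⦃A B : Finset α⦄, A ⊆ E → B ⊆ E →
    rk (A ∪ B) + rk (A ∩ B) ≤ rk A + rk B

/-- The multivariate subset-corank polynomial of the matroid-like data given by
ground set `G`, rank function `f`, and normalizing rank `s`: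
`SC = ∑_{A ⊆ G} (∏_{e ∈ A} x e) * l ^ (s - f A)`. -/
def SC {α R : Type*} [DecidableEq α] [CommRing R] (G : Finset α) (f : Finset α → ℕ)
    (s : ℕ) (x : α → R) (l : R) : R :=
  ∑ A ∈ G.powerset, (∏ e ∈ A, x e) * l ^ (s - f A)

/-!
Multiplicativity of the weights makes the left-hand side a sum `∑ A ⊆ E, F A * G A` with
`F A = (∏ e ∈ A, x e) * l ^ (r - rk A)` and `G A = (∏ e ∈ A, y e) * ξ ^ (r - rk A)`. Möbius
inversion on the Boolean lattice of subsets of `C` recovers `F C` from the signed sums of `F` over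
the subsets of each `T ⊆ C`; exchanging the order of summation then pairs the signed sum of `F`
below `T` with the sum of `G` above `T`. Coranks telescope along `B ⊆ T ⊆ C ⊆ E`, so the former is
the restriction polynomial times `l ^ (r - rk T)` and the latter is the contraction polynomial times
`∏ e ∈ T, y e`.
-/

theorem sum_powerset_sdiff_union_eq_sum_Icc {α β : Type*} [DecidableEq α] [AddCommMonoid β]
    {S T : Finset α} (h : S ⊆ T) (f : Finset α → β) :
    ∑ A ∈ (T \ S).powerset, f (A ∪ S) = ∑ C ∈ Icc S T, f C := by
  have union_injOn : Set.InjOn (· ∪ S) (T \ S).powerset :=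
    (disjoint_injOn_union_left S).mono fun _ hA =>
      disjoint_sdiff.mono_right (mem_powerset.1 hA)
  simp_rw [Icc_eq_image_powerset h, union_comm S, sum_image union_injOn]

theorem sum_powerset_sum_powerset_comm {α β : Type*} [DecidableEq α] [AddCommMonoid β]
    (E : Finset α) (f : Finset α → Finset α → β) :
    ∑ T ∈ E.powerset, ∑ S ∈ T.powerset, f S T = ∑ S ∈ E.powerset, ∑ T ∈ Icc S E, f S T := by
  refine sum_comm' fun T S => ?_
  simp only [mem_powerset, mem_Icc]
  exact ⟨fun ⟨hT, hS⟩ => ⟨⟨hS, hT⟩, hS.trans hT⟩, fun ⟨⟨hS, hT⟩, _⟩ => ⟨hT, hS⟩⟩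

theorem sum_Icc_neg_one_pow_card {α : Type*} [DecidableEq α] {S T : Finset α} (h : S ⊆ T) :
    ∑ A ∈ Icc S T, (-1 : ℤ) ^ #A = if S = T then (-1) ^ #S else 0 := by
  have card_union : ∀ A ∈ (T \ S).powerset, (-1 : ℤ) ^ #(A ∪ S) = (-1) ^ #A * (-1) ^ #S := by
    intro A hA
    rw [card_union_of_disjoint (sdiff_disjoint.mono_left (mem_powerset.1 hA)), pow_add]
  have sdiff_eq_empty : T \ S = ∅ ↔ S = T := by
    rw [sdiff_eq_empty_iff_subset, h.ge_iff_eq]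
  rw [← sum_powerset_sdiff_union_eq_sum_Icc h, sum_congr rfl card_union, ← sum_mul,
    sum_powerset_neg_one_pow_card]
  simp [sdiff_eq_empty]

theorem moebius_inversion_powerset {α β : Type*} [AddCommGroup β] (f : Finset α → β)
    (C : Finset α) :
    ∑ T ∈ C.powerset, (-1 : ℤ) ^ #T • ∑ B ∈ T.powerset, (-1 : ℤ) ^ #B • f B = f C := by
  classical
  calc
    _ = ∑ B ∈ C.powerset, ∑ T ∈ Icc B C, (-1 : ℤ) ^ #T • (-1 : ℤ) ^ #B • f B := by
      simp_rw [smul_sum, sum_powerset_sum_powerset_comm]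
    _ = ∑ B ∈ C.powerset, if B = C then f C else 0 := by
      refine sum_congr rfl fun B hB => ?_
      rw [← sum_smul, sum_Icc_neg_one_pow_card (mem_powerset.1 hB)]
      split_ifs with hBC
      · rw [smul_smul, ← mul_pow, neg_one_mul, neg_neg, one_pow, one_smul, hBC]
      · rw [zero_smul]
    _ = f C := by simp

theorem sum_powerset_mul_eq_sum_moebius {α R : Type*} [DecidableEq α] [Ring R] (E : Finset α)
    (f g : Finset α → R) :
    ∑ A ∈ E.powerset, f A * g A =
      ∑ T ∈ E.powerset,
        (-1) ^ #T * (∑ B ∈ T.powerset, (-1) ^ #B * f B) * ∑ C ∈ Icc T E, g C := by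
  have moebius (C : Finset α) :
      ∑ T ∈ C.powerset, (-1) ^ #T * ∑ B ∈ T.powerset, (-1) ^ #B * f B = f C := by
    simpa using moebius_inversion_powerset f C
  calc
    _ = ∑ A ∈ E.powerset, ∑ T ∈ A.powerset,
          (-1) ^ #T * (∑ B ∈ T.powerset, (-1) ^ #B * f B) * g A := by
      simp_rw [← sum_mul, moebius]
    _ = ∑ T ∈ E.powerset, ∑ A ∈ Icc T E,
          (-1) ^ #T * (∑ B ∈ T.powerset, (-1) ^ #B * f B) * g A :=
      sum_powerset_sum_powerset_comm ..
    _ = _ := by simp_rw [mul_sum]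

section SubsetCorank

variable {α R : Type*} [DecidableEq α] [CommRing R] {E T : Finset α} {rk : Finset α → ℕ}

theorem pow_mul_SC {r s : ℕ} (hrk : ∀ A ⊆ E, rk A ≤ r) (hrs : r ≤ s) (x : α → R) (l : R) :
    l ^ (s - r) * SC E rk r x l = SC E rk s x l := by
  simp only [SC, mul_sum]
  refine sum_congr rfl fun A hA => ?_
  rw [← Nat.sub_add_sub_cancel hrs (hrk A (mem_powerset.1 hA)), pow_add]
  ring

theorem SC_neg (r : ℕ) (x : α → R) (l : R) :
    SC E rk r (fun e => -x e) l =
      ∑ A ∈ E.powerset, (-1) ^ #A * ((∏ e ∈ A, x e) * l ^ (r - rk A)) := by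
  simp only [SC, prod_neg, mul_assoc]

theorem prod_mul_SC_contract (hTE : T ⊆ E) (hrk : ∀ C ∈ Icc T E, rk T ≤ rk C) (r : ℕ)
    (y : α → R) (ξ : R) :
    (∏ e ∈ T, y e) * SC (E \ T) (fun A => rk (A ∪ T) - rk T) (r - rk T) y ξ =
      ∑ C ∈ Icc T E, (∏ e ∈ C, y e) * ξ ^ (r - rk C) := by
  rw [← sum_powerset_sdiff_union_eq_sum_Icc hTE, SC, mul_sum]
  refine sum_congr rfl fun A hA => ?_
  have hAE : A ⊆ E \ T := mem_powerset.1 hA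
  have hAT : A ∪ T ∈ Icc T E :=
    mem_Icc.2 ⟨subset_union_right, union_subset (hAE.trans sdiff_subset) hTE⟩
  rw [prod_union (sdiff_disjoint.mono_left hAE), Nat.sub_sub_sub_cancel_right (hrk _ hAT)]
  ring

theorem SC_mul (r : ℕ) (x y : α → R) (l ξ : R) :
    SC E rk r (fun e => x e * y e) (l * ξ) =
      ∑ A ∈ E.powerset,
        ((∏ e ∈ A, x e) * l ^ (r - rk A)) * ((∏ e ∈ A, y e) * ξ ^ (r - rk A)) := by
  simp only [SC, prod_mul_distrib, mul_pow, mul_mul_mul_comm]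

theorem subset_corank_convolution_general (hrk : MonotoneOn rk (Set.Iic E)) (x y : α → R)
    (l ξ : R) :
    SC E rk (rk E) (fun e => x e * y e) (l * ξ) =
      ∑ T ∈ E.powerset,
        l ^ (rk E - rk T) * (∏ e ∈ T, (-y e)) *
          SC T rk (rk T) (fun e => -x e) l *
          SC (E \ T) (fun A => rk (A ∪ T) - rk T) (rk E - rk T) y ξ := by
  rw [SC_mul, sum_powerset_mul_eq_sum_moebius]
  refine sum_congr rfl fun T hT => ?_
  have hTE : T ⊆ E := mem_powerset.1 hT
  have rk_le_T : ∀ B ⊆ T, rk B ≤ rk T := fun B hB => hrk (hB.trans hTE) hTE hB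
  have rk_T_le : ∀ C ∈ Icc T E, rk T ≤ rk C := fun C hC =>
    hrk hTE (mem_Icc.1 hC).2 (mem_Icc.1 hC).1
  rw [← SC_neg, ← pow_mul_SC rk_le_T (hrk hTE Set.self_mem_Iic hTE),
    ← prod_mul_SC_contract hTE rk_T_le, prod_neg]
  ring

end SubsetCorank

/-- Identity 1: the convolution-multiplication identity for the multivariate
subset-corank polynomial.  Here `M|T` is encoded by ground set `T` with the same rank
function and rank `rk T`, and `M/T` by ground set `E \ T` with rank function
`A ↦ rk (A ∪ T) - rk T` and rank `rk E - rk T`. -/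
theorem subset_corank_convolution {α R : Type*} [DecidableEq α] [CommRing R]
    (M : FinMatroid α) (x y : α → R) (l ξ : R) :
    SC M.E M.rk (M.rk M.E) (fun e => x e * y e) (l * ξ) =
      ∑ T ∈ M.E.powerset,
        l ^ (M.rk M.E - M.rk T) * (∏ e ∈ T, (-y e)) *
          SC T M.rk (M.rk T) (fun e => -x e) l *
          SC (M.E \ T) (fun A => M.rk (A ∪ T) - M.rk T) (M.rk M.E - M.rk T) y ξ :=
  subset_corank_convolution_general (fun _ _ _ hB hAB => M.rk_mono hAB hB) x y l ξ
end

section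
/- Let M be a finite matroid of rank r on ground set E. For all commuting variables x, y, λ, ξ (equivalently, for all elements of any commutative ring), R(M; x·y, λ·ξ) = ∑_{T ⊆ E} λ^{r − rk(T)} · (−y)^{|T| − rk(T)} · R(M|T; −x, −λ) · R(M/T; y, ξ). -/
open Finset

/-- The nullity-corank (rank generating) polynomial of the matroid-like data given by
ground set `G`, rank function `f`, and normalizing rank `s`:
`R = ∑_{A ⊆ G} x ^ (|A| - f A) * l ^ (s - f A)`. -/
def RG {α R : Type*} [DecidableEq α] [CommRing R] (G : Finset α) (f : Finset α → ℕ)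
    (s : ℕ) (x l : R) : R :=
  ∑ A ∈ G.powerset, x ^ (A.card - f A) * l ^ (s - f A)

/-!
Write `F A = x ^ n(A) * l ^ c(A)` and `G B = y ^ n(B) * ξ ^ c(B)`, with `n` the nullity and `c` the
corank in `M`. Rank and nullity increments along `A ⊆ T ⊆ B` add up, and `T \ A` splits into a rank
and a nullity increment, so the signs give `(-1) ^ |T \ A|` and the `T`-th term on the right is
`(∑ A ⊆ T, (-1) ^ |T \ A| * F A) * ∑ B ⊇ T, G B`. By Möbius inversion on the Boolean lattice, these
products add up to `∑ A ⊆ E, F A * G A`, which is the left-hand side.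
-/

section BooleanLattice

variable {α : Type*} [DecidableEq α] {A B T : Finset α}

lemma sum_Icc_eq_sum_powerset_sdiff {N : Type*} [AddCommMonoid N] (h : T ⊆ B)
    (F : Finset α → N) : ∑ S ∈ Icc T B, F S = ∑ C ∈ (B \ T).powerset, F (C ∪ T) := by
  have disjoint_of_mem : ∀ C ∈ (B \ T).powerset, Disjoint C T := fun C hC =>
    disjoint_of_subset_left (mem_powerset.1 hC) sdiff_disjoint
  rw [Icc_eq_image_powerset h, sum_image]
  · simp only [union_comm]
  · intro C hC D hD hCD
    rw [← union_sdiff_cancel_left (disjoint_of_mem C hC).symm,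
      ← union_sdiff_cancel_left (disjoint_of_mem D hD).symm]
    exact congrArg (· \ T) hCD

lemma sum_Icc_neg_one_pow_card_sdiff {R : Type*} [Ring R] (h : A ⊆ B) :
    ∑ T ∈ Icc A B, (-1 : R) ^ #(T \ A) = if A = B then 1 else 0 := by
  have sdiff_eq_empty : B \ A = ∅ ↔ A = B :=
    sdiff_eq_empty_iff_subset.trans ⟨h.antisymm, fun hAB => hAB.ge⟩
  calc ∑ T ∈ Icc A B, (-1 : R) ^ #(T \ A)
      = ∑ C ∈ (B \ A).powerset, (-1 : R) ^ #C := by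
        rw [sum_Icc_eq_sum_powerset_sdiff h]
        refine sum_congr rfl fun C hC => ?_
        rw [union_sdiff_cancel_right
          (disjoint_of_subset_left (mem_powerset.1 hC) sdiff_disjoint)]
    _ = ((∑ C ∈ (B \ A).powerset, (-1) ^ #C : ℤ) : R) := by push_cast; rfl
    _ = if A = B then 1 else 0 := by
        simp only [sum_powerset_neg_one_pow_card, sdiff_eq_empty, Int.cast_ite, Int.cast_one,
          Int.cast_zero]

lemma sum_powerset_sum_powerset_neg_one_pow_card_sdiff_mul {R : Type*} [Ring R]
    (F : Finset α → R) (B : Finset α) :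
    ∑ T ∈ B.powerset, ∑ A ∈ T.powerset, (-1) ^ #(T \ A) * F A = F B := by
  calc ∑ T ∈ B.powerset, ∑ A ∈ T.powerset, (-1) ^ #(T \ A) * F A
      = ∑ A ∈ B.powerset, ∑ T ∈ Icc A B, (-1) ^ #(T \ A) * F A :=
        sum_comm' fun T A => by
          simp only [mem_powerset, mem_Icc]
          exact ⟨fun ⟨hTB, hAT⟩ => ⟨⟨hAT, hTB⟩, hAT.trans hTB⟩, fun ⟨⟨hAT, hTB⟩, _⟩ => ⟨hTB, hAT⟩⟩
    _ = ∑ A ∈ B.powerset, if A = B then F A else 0 := by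
        refine sum_congr rfl fun A hA => ?_
        rw [← sum_mul, sum_Icc_neg_one_pow_card_sdiff (mem_powerset.1 hA), ite_mul, one_mul,
          zero_mul]
    _ = F B := by rw [sum_ite_eq', if_pos (mem_powerset_self B)]

lemma sum_powerset_alternating_sum_mul_sum_Icc {R : Type*} [Ring R]
    (F G : Finset α → R) (E : Finset α) :
    ∑ T ∈ E.powerset, (∑ A ∈ T.powerset, (-1) ^ #(T \ A) * F A) * ∑ B ∈ Icc T E, G B =
      ∑ B ∈ E.powerset, F B * G B := by
  simp only [mul_sum]
  rw [sum_comm' (t' := E.powerset) (s' := powerset)]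
  · simp only [← sum_mul, sum_powerset_sum_powerset_neg_one_pow_card_sdiff_mul]
  · intro T B
    simp only [mem_powerset, mem_Icc]
    exact ⟨fun ⟨_, hTB, hBE⟩ => ⟨hTB, hBE⟩, fun ⟨hTB, hBE⟩ => ⟨hTB.trans hBE, hTB, hBE⟩⟩

end BooleanLattice

/-- `f` is the rank function of a demi-matroid on `E` (Britz, Johnsen, Mayhew and Shiromoto): both
rank and nullity are monotone and vanish on `∅`. This is the generality of the convolution identity.
Monotonicity of the nullity is encoded as `f B ≤ f A + #(B \ A)`, which avoids truncated
subtraction; the values of `f` outside the subsets of `E` are arbitrary. -/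
structure IsDemimatroidRank {α : Type*} [DecidableEq α] (E : Finset α) (f : Finset α → ℕ) :
    Prop where
  map_empty : f ∅ = 0
  mono : ∀ ⦃A B : Finset α⦄, A ⊆ B → B ⊆ E → f A ≤ f B
  le_add_card_sdiff : ∀ ⦃A B : Finset α⦄, A ⊆ B → B ⊆ E → f B ≤ f A + #(B \ A)

lemma FinMatroid.isDemimatroidRank {α : Type*} [DecidableEq α] (M : FinMatroid α) :
    IsDemimatroidRank M.E M.rk where
  map_empty := Nat.le_zero.1 (M.rk_le_card ∅ (empty_subset _))
  mono := M.rk_mono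
  le_add_card_sdiff A B hAB hB := by
    have hdiff : B \ A ⊆ M.E := sdiff_subset.trans hB
    calc M.rk B = M.rk (A ∪ B \ A) := by rw [union_sdiff_of_subset hAB]
      _ ≤ M.rk (A ∪ B \ A) + M.rk (A ∩ (B \ A)) := Nat.le_add_right _ _
      _ ≤ M.rk A + M.rk (B \ A) := M.rk_submod (hAB.trans hB) hdiff
      _ ≤ M.rk A + #(B \ A) := Nat.add_le_add_left (M.rk_le_card _ hdiff) _

namespace IsDemimatroidRank

variable {α : Type*} [DecidableEq α] {E A T : Finset α} {f : Finset α → ℕ}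

lemma le_card (hf : IsDemimatroidRank E f) (hA : A ⊆ E) : f A ≤ #A := by
  simpa only [hf.map_empty, zero_add, sdiff_empty] using
    hf.le_add_card_sdiff (empty_subset A) hA

variable {R : Type*} [CommRing R]

lemma pow_mul_neg_one_pow_mul_RG_restriction (hf : IsDemimatroidRank E f) (hT : T ⊆ E)
    (x l : R) :
    l ^ (f E - f T) * (-1) ^ (#T - f T) * RG T f (f T) (-x) (-l) =
      ∑ A ∈ T.powerset, (-1) ^ #(T \ A) * (x ^ (#A - f A) * l ^ (f E - f A)) := by
  rw [RG, mul_sum]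
  refine sum_congr rfl fun A hA => ?_
  have hAT : A ⊆ T := mem_powerset.1 hA
  have rank_A_le : f A ≤ f T := hf.mono hAT hT
  have rank_T_le : f T ≤ f E := hf.mono hT Subset.rfl
  have corank_add : f E - f A = (f E - f T) + (f T - f A) := by omega
  have sign_exponent : (#T - f T) + (#A - f A) + (f T - f A) = #(T \ A) + 2 * (#A - f A) := by
    have := hf.le_card hT
    have := hf.le_card (hAT.trans hT)
    have := card_sdiff_add_card_eq_card hAT
    omega
  have sign_eq : (-1 : R) ^ (#T - f T) * (-1) ^ (#A - f A) * (-1) ^ (f T - f A) =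
      (-1) ^ #(T \ A) := by
    rw [← pow_add, ← pow_add, sign_exponent, pow_add, pow_mul, neg_one_sq, one_pow, mul_one]
  rw [neg_pow x, neg_pow l, corank_add, pow_add, ← sign_eq]
  ring

lemma pow_mul_RG_contraction (hf : IsDemimatroidRank E f) (hT : T ⊆ E) (s : ℕ) (y ξ : R) :
    y ^ (#T - f T) * RG (E \ T) (fun A => f (A ∪ T) - f T) (s - f T) y ξ =
      ∑ B ∈ Icc T E, y ^ (#B - f B) * ξ ^ (s - f B) := by
  rw [RG, mul_sum, sum_Icc_eq_sum_powerset_sdiff hT]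
  refine sum_congr rfl fun C hC => ?_
  have hCE : C ⊆ E \ T := mem_powerset.1 hC
  have hdisj : Disjoint C T := disjoint_of_subset_left hCE sdiff_disjoint
  have hUE : C ∪ T ⊆ E := union_subset (hCE.trans sdiff_subset) hT
  have rank_le : f T ≤ f (C ∪ T) := hf.mono subset_union_right hUE
  have rank_union_le : f (C ∪ T) ≤ f T + #C := by
    simpa only [union_sdiff_cancel_right hdisj] using
      hf.le_add_card_sdiff subset_union_right hUE
  have nullity_add :
      #(C ∪ T) - f (C ∪ T) = (#T - f T) + (#C - (f (C ∪ T) - f T)) := by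
    have := hf.le_card hT
    have := card_union_of_disjoint hdisj
    omega
  have corank_eq : s - f (C ∪ T) = s - f T - (f (C ∪ T) - f T) := by omega
  rw [nullity_add, corank_eq, pow_add, mul_assoc]

end IsDemimatroidRank

theorem rank_generating_convolution_general {α R : Type*} [DecidableEq α] [CommRing R]
    {E : Finset α} {f : Finset α → ℕ} (hf : IsDemimatroidRank E f) (x y l ξ : R) :
    RG E f (f E) (x * y) (l * ξ) =
      ∑ T ∈ E.powerset,
        l ^ (f E - f T) * (-y) ^ (#T - f T) * RG T f (f T) (-x) (-l) *
          RG (E \ T) (fun A => f (A ∪ T) - f T) (f E - f T) y ξ := by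
  calc RG E f (f E) (x * y) (l * ξ)
      = ∑ A ∈ E.powerset,
          (x ^ (#A - f A) * l ^ (f E - f A)) * (y ^ (#A - f A) * ξ ^ (f E - f A)) := by
        simp only [RG, mul_pow, mul_mul_mul_comm]
    _ = ∑ T ∈ E.powerset,
          (∑ A ∈ T.powerset, (-1) ^ #(T \ A) * (x ^ (#A - f A) * l ^ (f E - f A))) *
            ∑ B ∈ Icc T E, y ^ (#B - f B) * ξ ^ (f E - f B) :=
        (sum_powerset_alternating_sum_mul_sum_Icc _ _ E).symm
    _ = _ := by
        refine sum_congr rfl fun T hT => ?_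
        rw [← hf.pow_mul_neg_one_pow_mul_RG_restriction (mem_powerset.1 hT),
          ← hf.pow_mul_RG_contraction (mem_powerset.1 hT), neg_pow y]
        ring

/-- Identity 3: the convolution-multiplication identity for the nullity-corank
(rank generating) polynomial. -/
theorem rank_generating_convolution {α R : Type*} [DecidableEq α] [CommRing R]
    (M : FinMatroid α) (x y l ξ : R) :
    RG M.E M.rk (M.rk M.E) (x * y) (l * ξ) =
      ∑ T ∈ M.E.powerset,
        l ^ (M.rk M.E - M.rk T) * (-y) ^ (T.card - M.rk T) *
          RG T M.rk (M.rk T) (-x) (-l) *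
          RG (M.E \ T) (fun A => M.rk (A ∪ T) - M.rk T) (M.rk M.E - M.rk T) y ξ :=
  rank_generating_convolution_general M.isDemimatroidRank x y l ξ
end

section
/- Let M be a finite matroid of rank r on ground set E. For all assignments of commuting variables x = (x_e)_{e∈E}, y = (y_e)_{e∈E} and ξ (equivalently, for all elements of any commutative ring), SC(M; (x_e·y_e)_{e∈E}, ξ) = ∑_{T ⊆ E} (∏_{e∈T} (x_e + 1)) · (∏_{e∈T} y_e) · SC(M/T; (−y_e)_{e∈E∖T}, ξ). -/
open Finset

/-! Splitting each weight as `x e * y e = (x e + 1) * y e + -y e`, expand the product over a set `B`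
as a sum over partitions `B = T ∪ A` and collect the terms with the same `T`. The corank of `A` in
`M / T` equals the corank of `A ∪ T` in `M`, so what multiplies `∏ e ∈ T, (x e + 1) * y e` is the
subset-corank polynomial of `M / T`. -/

theorem sum_powerset_sum_powerset_sdiff {α β : Type*} [DecidableEq α] [AddCommMonoid β]
    (G : Finset α) (F : Finset α → Finset α → β) :
    ∑ B ∈ G.powerset, ∑ T ∈ B.powerset, F T (B \ T) =
      ∑ T ∈ G.powerset, ∑ A ∈ (G \ T).powerset, F T A := by
  have leftInvOn_sdiff (T : Finset α) :
      Set.LeftInvOn (· \ T) (T ∪ ·) ((G \ T).powerset : Set (Finset α)) :=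
    fun _ hA => union_sdiff_cancel_left (disjoint_sdiff.mono_right (mem_powerset.mp hA))
  calc
    _ = ∑ T ∈ G.powerset, ∑ B ∈ Icc T G, F T (B \ T) := by
      refine sum_comm' fun B T => ?_
      simp only [mem_powerset, mem_Icc]
      exact ⟨fun ⟨hB, hT⟩ => ⟨⟨hT, hB⟩, hT.trans hB⟩, fun ⟨⟨hT, hB⟩, _⟩ => ⟨hB, hT⟩⟩
    _ = ∑ T ∈ G.powerset, ∑ A ∈ (G \ T).powerset, F T ((T ∪ A) \ T) := by
      refine sum_congr rfl fun T hT => ?_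
      rw [Icc_eq_image_powerset (mem_powerset.mp hT), sum_image (leftInvOn_sdiff T).injOn]
    _ = _ := sum_congr rfl fun T _ => sum_congr rfl fun _ hA =>
      congrArg (F T) (leftInvOn_sdiff T hA)

theorem sum_powerset_prod_add_mul {α R : Type*} [DecidableEq α] [CommSemiring R]
    (G : Finset α) (u v : α → R) (w : Finset α → R) :
    ∑ B ∈ G.powerset, (∏ e ∈ B, (u e + v e)) * w B =
      ∑ T ∈ G.powerset, (∏ e ∈ T, u e) * ∑ A ∈ (G \ T).powerset, (∏ e ∈ A, v e) * w (A ∪ T) := by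
  calc
    _ = ∑ B ∈ G.powerset, ∑ T ∈ B.powerset,
          (∏ e ∈ T, u e) * ((∏ e ∈ B \ T, v e) * w (B \ T ∪ T)) := by
      refine sum_congr rfl fun B _ => ?_
      rw [prod_add, sum_mul]
      refine sum_congr rfl fun T hT => ?_
      rw [sdiff_union_of_subset (mem_powerset.mp hT), mul_assoc]
    _ = ∑ T ∈ G.powerset, ∑ A ∈ (G \ T).powerset,
          (∏ e ∈ T, u e) * ((∏ e ∈ A, v e) * w (A ∪ T)) :=
      sum_powerset_sum_powerset_sdiff G fun T A =>
        (∏ e ∈ T, u e) * ((∏ e ∈ A, v e) * w (A ∪ T))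
    _ = _ := by simp only [mul_sum]

theorem subset_corank_contraction_sum_general {α R : Type*} [DecidableEq α] [CommRing R]
    {G : Finset α} {f : Finset α → ℕ} (hf : MonotoneOn f (Set.Iic G)) (u v : α → R) (ξ : R) :
    SC G f (f G) (fun e => u e + v e) ξ =
      ∑ T ∈ G.powerset,
        (∏ e ∈ T, u e) * SC (G \ T) (fun A => f (A ∪ T) - f T) (f G - f T) v ξ := by
  simp only [SC]
  rw [sum_powerset_prod_add_mul]
  refine sum_congr rfl fun T hT => congrArg _ (sum_congr rfl fun A hA => ?_)
  have hTG : T ⊆ G := mem_powerset.mp hT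
  have hATG : A ∪ T ⊆ G := union_subset ((mem_powerset.mp hA).trans sdiff_subset) hTG
  have f_le : f T ≤ f (A ∪ T) := hf hTG hATG subset_union_right
  rw [Nat.sub_sub_sub_cancel_right f_le]

/-- Identity 4: the multivariate subset-corank polynomial as a weighted sum of
subset-corank polynomials of contractions. -/
theorem subset_corank_contraction_sum {α R : Type*} [DecidableEq α] [CommRing R]
    (M : FinMatroid α) (x y : α → R) (ξ : R) :
    SC M.E M.rk (M.rk M.E) (fun e => x e * y e) ξ =
      ∑ T ∈ M.E.powerset,
        (∏ e ∈ T, (x e + 1)) * (∏ e ∈ T, y e) *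
          SC (M.E \ T) (fun A => M.rk (A ∪ T) - M.rk T) (M.rk M.E - M.rk T)
            (fun e => -y e) ξ := by
  have split_weight : (fun e => x e * y e) = fun e => (x e + 1) * y e + -y e := by
    ext e
    ring
  have rk_monotoneOn : MonotoneOn M.rk (Set.Iic M.E) := fun _ _ _ hB hAB => M.rk_mono hAB hB
  simp only [split_weight, subset_corank_contraction_sum_general rk_monotoneOn, prod_mul_distrib]
end

section
/- Let M be a finite matroid of rank r on ground set E. For all commuting variables x and ξ (equivalently, for all elements of any commutative ring), SC(M; x, ξ) = ∑_{X flat of M} (x + 1)^{|X|} · χ(M/X; ξ), where the sum ranges over all flats (closed sets) X of M. -/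
open Finset

/-- The (bivariate) size-corank polynomial of the matroid-like data given by
ground set `G`, rank function `f`, and normalizing rank `s`:
`SC = ∑_{A ⊆ G} x ^ |A| * l ^ (s - f A)`. -/
def SCsize {α R : Type*} [DecidableEq α] [CommRing R] (G : Finset α) (f : Finset α → ℕ)
    (s : ℕ) (x l : R) : R :=
  ∑ A ∈ G.powerset, x ^ A.card * l ^ (s - f A)

/-- The characteristic polynomial of the matroid-like data given by ground set `G`,
rank function `f`, and rank `s`: `χ = ∑_{A ⊆ G} (-1) ^ |A| * l ^ (s - f A)`. -/
def charPoly {α R : Type*} [DecidableEq α] [CommRing R] (G : Finset α) (f : Finset α → ℕ)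
    (s : ℕ) (l : R) : R :=
  ∑ A ∈ G.powerset, (-1 : R) ^ A.card * l ^ (s - f A)

/-!
Expanding `x ^ |B| = ((x + 1) - 1) ^ |B|` over the subsets `X` of `B` and exchanging the two sums
writes the size-corank polynomial as a sum over *all* `X ⊆ E` of `(x + 1) ^ |X|` times an
alternating sum over `X ⊆ B ⊆ E`, which is `χ(M/X; ξ)`. If `X` is not a flat, some `e ∉ X` is a loop
of `M/X`; toggling `e` is then a sign-reversing involution that kills `χ(M/X; ξ)`, so only flats
contribute.
-/

/-- Submodularity of a set function on the subsets of `E`. Together with monotonicity it gives the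
rank functions of integer polymatroids, up to the normalization `f ∅ = 0`. -/
def SubmodularOn {α : Type*} [DecidableEq α] (E : Finset α) (f : Finset α → ℕ) : Prop :=
  ∀ ⦃A B : Finset α⦄, A ⊆ E → B ⊆ E → f (A ∪ B) + f (A ∩ B) ≤ f A + f B

section PowersetSums

variable {α R : Type*} [DecidableEq α]

theorem sum_powerset_neg_one_pow_card_mul_eq_zero [Ring R] {S : Finset α} {e : α} (he : e ∈ S)
    {g : Finset α → R} (hg : ∀ A ⊆ S.erase e, g (insert e A) = g A) :
    ∑ A ∈ S.powerset, (-1) ^ #A * g A = 0 := by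
  rw [← insert_erase he, sum_powerset_insert (notMem_erase e S), ← sum_add_distrib]
  refine sum_eq_zero fun A hA => ?_
  have hAS : A ⊆ S.erase e := mem_powerset.mp hA
  have heA : e ∉ A := fun h => notMem_erase e S (hAS h)
  rw [hg A hAS, card_insert_of_notMem heA, pow_succ, mul_neg_one, neg_mul, add_neg_cancel]

theorem sum_Icc_eq_sum_powerset_sdiff_s5 [AddCommMonoid R] {X E : Finset α} (hX : X ⊆ E)
    (g : Finset α → R) : ∑ B ∈ Icc X E, g B = ∑ A ∈ (E \ X).powerset, g (A ∪ X) := by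
  have union_injOn : Set.InjOn (X ∪ ·) ((E \ X).powerset : Set (Finset α)) := by
    intro A hA B hB hAB
    have hdisj {C : Finset α} (hC : C ∈ (E \ X).powerset) : Disjoint X C :=
      disjoint_of_subset_right (mem_powerset.mp hC) disjoint_sdiff
    rw [← union_sdiff_cancel_left (hdisj hA), ← union_sdiff_cancel_left (hdisj hB)]
    exact congrArg (· \ X) hAB
  rw [Icc_eq_image_powerset hX, sum_image union_injOn]
  simp only [union_comm X]

theorem sum_powerset_pow_card_mul_sum_Icc [CommSemiring R] (E : Finset α) (g : Finset α → R)
    (a b : R) :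
    ∑ X ∈ E.powerset, a ^ #X * ∑ B ∈ Icc X E, b ^ #(B \ X) * g B =
      ∑ B ∈ E.powerset, (a + b) ^ #B * g B := by
  have binomial (B : Finset α) : ∑ X ∈ B.powerset, a ^ #X * b ^ #(B \ X) = (a + b) ^ #B := by
    simpa only [prod_const] using (prod_add (fun _ => a) (fun _ => b) B).symm
  calc
    _ = ∑ X ∈ E.powerset, ∑ B ∈ Icc X E, a ^ #X * b ^ #(B \ X) * g B := by
      simp only [mul_sum, mul_assoc]
    _ = ∑ B ∈ E.powerset, ∑ X ∈ B.powerset, a ^ #X * b ^ #(B \ X) * g B :=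
      sum_comm' fun X B => by
        simp only [mem_powerset, mem_Icc]
        exact ⟨fun h => h.2, fun h => ⟨h.1.trans h.2, h⟩⟩
    _ = ∑ B ∈ E.powerset, (a + b) ^ #B * g B := by
      simp only [← sum_mul, binomial]

end PowersetSums

section MonotoneSubmodular

variable {α R : Type*} [DecidableEq α] [CommRing R] {E X : Finset α} {rk : Finset α → ℕ} {e : α}

theorem SubmodularOn.insert_eq_of_subset (submod : SubmodularOn E rk)
    (mono : MonotoneOn rk (Set.Iic E)) {A : Finset α} (hXA : X ⊆ A) (hA : A ⊆ E) (he : e ∈ E)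
    (hrk : rk (insert e X) ≤ rk X) : rk (insert e A) = rk A := by
  have heA : insert e A ⊆ E := insert_subset he hA
  refine le_antisymm ?_ (mono hA heA (subset_insert e A))
  have hunion : A ∪ insert e X = insert e A := by rw [union_insert, union_eq_left.mpr hXA]
  have hinter : X ⊆ A ∩ insert e X := subset_inter hXA (subset_insert e X)
  have hsub := submod hA (insert_subset he (hXA.trans hA))
  have hmono : rk X ≤ rk (A ∩ insert e X) :=
    mono (hXA.trans hA) (inter_subset_left.trans hA) hinter
  rw [hunion] at hsub
  omega

theorem charPoly_contract_eq_sum_Icc (mono : MonotoneOn rk (Set.Iic E)) (hX : X ⊆ E) (s : ℕ)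
    (ξ : R) :
    charPoly (E \ X) (fun A => rk (A ∪ X) - rk X) (s - rk X) ξ =
      ∑ B ∈ Icc X E, (-1) ^ #(B \ X) * ξ ^ (s - rk B) := by
  rw [charPoly, sum_Icc_eq_sum_powerset_sdiff_s5 hX]
  refine sum_congr rfl fun A hA => ?_
  have hAE : A ⊆ E \ X := mem_powerset.mp hA
  have hAX : A ∪ X ⊆ E := union_subset (hAE.trans sdiff_subset) hX
  have hrk : rk X ≤ rk (A ∪ X) := mono hX hAX subset_union_right
  rw [tsub_tsub_tsub_cancel_right hrk,
    union_sdiff_cancel_right (disjoint_of_subset_left hAE sdiff_disjoint)]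

theorem charPoly_contract_eq_zero_of_rk_insert_le (mono : MonotoneOn rk (Set.Iic E))
    (submod : SubmodularOn E rk) (hX : X ⊆ E) (he : e ∈ E \ X) (hrk : rk (insert e X) ≤ rk X)
    (s : ℕ) (ξ : R) : charPoly (E \ X) (fun A => rk (A ∪ X) - rk X) s ξ = 0 := by
  refine sum_powerset_neg_one_pow_card_mul_eq_zero he fun A hA => ?_
  have hAX : A ∪ X ⊆ E := union_subset ((hA.trans (erase_subset e _)).trans sdiff_subset) hX
  have hinsert : rk (insert e (A ∪ X)) = rk (A ∪ X) :=
    submod.insert_eq_of_subset mono subset_union_right hAX (sdiff_subset he) hrk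
  simp only [insert_union, hinsert]

theorem size_corank_flat_sum_general (mono : MonotoneOn rk (Set.Iic E))
    (submod : SubmodularOn E rk) (x ξ : R) :
    SCsize E rk (rk E) x ξ =
      ∑ X ∈ E.powerset.filter (fun X => ∀ e ∈ E \ X, rk X < rk (insert e X)),
        (x + 1) ^ X.card *
          charPoly (E \ X) (fun A => rk (A ∪ X) - rk X) (rk E - rk X) ξ := by
  have flat_of_ne_zero : ∀ X ∈ E.powerset,
      (x + 1) ^ #X * charPoly (E \ X) (fun A => rk (A ∪ X) - rk X) (rk E - rk X) ξ ≠ 0 →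
        ∀ e ∈ E \ X, rk X < rk (insert e X) := by
    intro X hX hne e he
    contrapose! hne
    rw [charPoly_contract_eq_zero_of_rk_insert_le mono submod (mem_powerset.mp hX) he hne, mul_zero]
  rw [sum_filter_of_ne flat_of_ne_zero]
  symm
  calc
    _ = ∑ X ∈ E.powerset,
          (x + 1) ^ #X * ∑ B ∈ Icc X E, (-1) ^ #(B \ X) * ξ ^ (rk E - rk B) :=
      sum_congr rfl fun X hX => by rw [charPoly_contract_eq_sum_Icc mono (mem_powerset.mp hX)]
    _ = ∑ B ∈ E.powerset, (x + 1 + -1) ^ #B * ξ ^ (rk E - rk B) :=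
      sum_powerset_pow_card_mul_sum_Icc E (fun B => ξ ^ (rk E - rk B)) (x + 1) (-1)
    _ = SCsize E rk (rk E) x ξ := by rw [add_neg_cancel_right, SCsize]

end MonotoneSubmodular

/-- Identity 5 (bivariate form): the size-corank polynomial as a sum over flats
of weighted characteristic polynomials of contractions.  A flat of `M` is a subset `X`
of the ground set such that adjoining any element outside `X` strictly increases the
rank. -/
theorem size_corank_flat_sum {α R : Type*} [DecidableEq α] [CommRing R]
    (M : FinMatroid α) (x ξ : R) :
    SCsize M.E M.rk (M.rk M.E) x ξ =
      ∑ X ∈ M.E.powerset.filter (fun X => ∀ e ∈ M.E \ X, M.rk X < M.rk (insert e X)),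
        (x + 1) ^ X.card *
          charPoly (M.E \ X) (fun A => M.rk (A ∪ X) - M.rk X) (M.rk M.E - M.rk X) ξ :=
  size_corank_flat_sum_general (fun _ _ _ hB hAB => M.rk_mono hAB hB) M.rk_submod x ξ
end

section
/- Let M be a finite matroid of rank r on ground set E. For all assignments of commuting variables x = (x_e)_{e∈E}, y = (y_e)_{e∈E} and λ (equivalently, for all elements of any commutative ring), SC(M; (x_e·y_e)_{e∈E}, λ) = ∑_{T ⊆ E} λ^{r − rk(T)} · SC(M|T; (x_e)_{e∈T}, λ) · (∏_{e∈T} y_e) · (∏_{e∈E∖T} (1 − y_e)). -/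
open Finset

/-!
Think of `T` as a random subset of `E` containing each `e` independently with probability `y e`. A
fixed `A ⊆ E` lies in `T` with probability `∏ e ∈ A, y e`, since the factors `y e + (1 - y e)` of
the remaining elements are `1`. Hence the expectation of `∑ A ⊆ T, g A` is
`∑ A ⊆ E, g A * ∏ e ∈ A, y e` for every weight `g`. The factor `l ^ (r - rk T)` turns the corank
exponents in `T` into those in `E`, so that `g A = (∏ e ∈ A, x e) * l ^ (r - rk A)` does not depend
on `T`.
-/

section

variable {α R : Type*} [DecidableEq α]

theorem sum_Icc_prod_mul_prod_sdiff [CommSemiring R]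
    {A E : Finset α} (hAE : A ⊆ E) (y z : α → R) :
    ∑ T ∈ Icc A E, (∏ e ∈ T, y e) * ∏ e ∈ E \ T, z e =
      (∏ e ∈ A, y e) * ∏ e ∈ E \ A, (y e + z e) := by
  have disjoint_of_mem {S : Finset α} (hS : S ∈ (E \ A).powerset) : Disjoint A S :=
    disjoint_sdiff.mono_right (mem_powerset.1 hS)
  have union_injOn : Set.InjOn (A ∪ ·) ((E \ A).powerset : Set (Finset α)) := by
    intro S hS S' hS' h
    rw [← union_sdiff_cancel_left (disjoint_of_mem hS),
      ← union_sdiff_cancel_left (disjoint_of_mem hS')]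
    exact congrArg (· \ A) h
  rw [Icc_eq_image_powerset hAE, sum_image union_injOn, prod_add, mul_sum]
  refine sum_congr rfl fun S hS => ?_
  rw [prod_union (disjoint_of_mem hS), ← sup_eq_union, ← sdiff_sdiff_left, mul_assoc]

theorem sum_powerset_sum_powerset_mul_prod [CommSemiring R]
    (E : Finset α) (g : Finset α → R) (y z : α → R) :
    ∑ T ∈ E.powerset, (∑ A ∈ T.powerset, g A) * ((∏ e ∈ T, y e) * ∏ e ∈ E \ T, z e) =
      ∑ A ∈ E.powerset, g A * ((∏ e ∈ A, y e) * ∏ e ∈ E \ A, (y e + z e)) := by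
  have mem_swap (T A : Finset α) :
      T ∈ E.powerset ∧ A ∈ T.powerset ↔ T ∈ Icc A E ∧ A ∈ E.powerset := by
    simp only [mem_powerset, mem_Icc]
    exact ⟨fun ⟨hTE, hAT⟩ => ⟨⟨hAT, hTE⟩, hAT.trans hTE⟩, fun ⟨⟨hAT, hTE⟩, _⟩ => ⟨hTE, hAT⟩⟩
  simp only [sum_mul]
  rw [sum_comm' mem_swap]
  refine sum_congr rfl fun A hA => ?_
  rw [← mul_sum, sum_Icc_prod_mul_prod_sdiff (mem_powerset.1 hA)]

theorem pow_sub_mul_SC [CommRing R] {T : Finset α}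
    {f : Finset α → ℕ} {s t : ℕ} (hft : ∀ A ⊆ T, f A ≤ t) (hts : t ≤ s) (x : α → R) (l : R) :
    l ^ (s - t) * SC T f t x l = SC T f s x l := by
  unfold SC
  rw [mul_sum]
  refine sum_congr rfl fun A hA => ?_
  rw [mul_left_comm, ← pow_add, Nat.sub_add_sub_cancel hts (hft A (mem_powerset.1 hA))]

theorem subset_corank_restriction_sum_general [CommRing R]
    {E : Finset α} {f : Finset α → ℕ} (hf : MonotoneOn f (Set.Iic E)) (x y : α → R) (l : R) :
    SC E f (f E) (fun e => x e * y e) l =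
      ∑ T ∈ E.powerset,
        l ^ (f E - f T) * SC T f (f T) x l * (∏ e ∈ T, y e) * (∏ e ∈ E \ T, (1 - y e)) := by
  have renormalize {T : Finset α} (hT : T ⊆ E) :
      l ^ (f E - f T) * SC T f (f T) x l = SC T f (f E) x l :=
    pow_sub_mul_SC (fun _ hA => hf (hA.trans hT) hT hA) (hf hT Set.self_mem_Iic hT) x l
  calc
    SC E f (f E) (fun e => x e * y e) l
      = ∑ A ∈ E.powerset, (∏ e ∈ A, x e) * l ^ (f E - f A) *
          ((∏ e ∈ A, y e) * ∏ e ∈ E \ A, (y e + (1 - y e))) := by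
      simp only [SC, add_sub_cancel, prod_const_one, mul_one, prod_mul_distrib, mul_right_comm]
    _ = ∑ T ∈ E.powerset, SC T f (f E) x l * ((∏ e ∈ T, y e) * ∏ e ∈ E \ T, (1 - y e)) :=
      (sum_powerset_sum_powerset_mul_prod E _ y _).symm
    _ = ∑ T ∈ E.powerset,
          l ^ (f E - f T) * SC T f (f T) x l * (∏ e ∈ T, y e) * (∏ e ∈ E \ T, (1 - y e)) :=
      sum_congr rfl fun T hT => by rw [renormalize (mem_powerset.1 hT), mul_assoc]

end

/-- Identity 7: the subset-corank polynomial at `x·y` as a weighted sum of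
subset-corank polynomials of restrictions. -/
theorem subset_corank_restriction_sum {α R : Type*} [DecidableEq α] [CommRing R]
    (M : FinMatroid α) (x y : α → R) (l : R) :
    SC M.E M.rk (M.rk M.E) (fun e => x e * y e) l =
      ∑ T ∈ M.E.powerset,
        l ^ (M.rk M.E - M.rk T) * SC T M.rk (M.rk T) x l *
          (∏ e ∈ T, y e) * (∏ e ∈ M.E \ T, (1 - y e)) :=
  subset_corank_restriction_sum_general (fun _ _ _ hB hAB => M.rk_mono hAB hB) x y l
end

section
/- Let M be a finite matroid of rank r on ground set E, and let (p_e)_{e∈E} be real numbers with p_e ≠ 1 for all e. Then for every real number ξ, ∑_{T ⊆ E} (∏_{e∈T} p_e) · (∏_{e∈E∖T} (1 − p_e)) · χ(M/T; ξ) = (∏_{e∈E} (1 − p_e)) · SC(M; (p_e/(1 − p_e) − 1)_{e∈E}, ξ). In words: the expected value of the characteristic polynomial χ(H; ξ) of a random contraction H = M/T, where T is formed by including each element e independently with probability p_e, equals (∏_{e∈E}(1−p_e)) · SC(M; (p/(1−p)) − 1, ξ). -/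
open Finset

/-!
Expanding the weights `∏ e ∈ A, (x e + y e)` of `SC(M; x + y, ξ)` chooses, for each `A`, the part
`T ⊆ A` that carries the factors `x`; the rest `A \ T` is a subset of the ground set of `M / T`,
of the same corank there as `A` has in `M`. Hence
`SC(M; x + y, ξ) = ∑ T, (∏ e ∈ T, x e) * SC(M / T; y, ξ)`.
The theorem is the case of the odds `x = p / (1 - p)` and of `y = -1`, where `SC` becomes the
characteristic polynomial.
-/

theorem sum_powerset_sdiff_eq_sum_Icc {α N : Type*} [DecidableEq α] [AddCommMonoid N]
    {T G : Finset α} (hT : T ⊆ G) (g : Finset α → N) :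
    ∑ B ∈ (G \ T).powerset, g B = ∑ A ∈ Icc T G, g (A \ T) := by
  have sdiff_union_eq (B : Finset α) (hB : B ∈ (G \ T).powerset) : (B ∪ T) \ T = B :=
    union_sdiff_cancel_right (sdiff_disjoint.mono_left (mem_powerset.1 hB))
  refine sum_nbij' (· ∪ T) (· \ T) ?_ ?_ sdiff_union_eq ?_ ?_
  · intro B hB
    exact mem_Icc.2
      ⟨subset_union_right, union_subset ((mem_powerset.1 hB).trans sdiff_subset) hT⟩
  · intro A hA
    exact mem_powerset.2 (sdiff_subset_sdiff (mem_Icc.1 hA).2 subset_rfl)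
  · intro A hA
    exact sdiff_union_of_subset (mem_Icc.1 hA).1
  · intro B hB
    rw [sdiff_union_eq B hB]

theorem sum_powerset_sdiff_comm {α N : Type*} [DecidableEq α] [AddCommMonoid N]
    (G : Finset α) (F : Finset α → Finset α → N) :
    ∑ T ∈ G.powerset, ∑ B ∈ (G \ T).powerset, F T B =
      ∑ A ∈ G.powerset, ∑ T ∈ A.powerset, F T (A \ T) := by
  rw [sum_congr rfl fun T hT => sum_powerset_sdiff_eq_sum_Icc (mem_powerset.1 hT) (F T)]
  refine sum_comm' fun T A => ?_
  simp only [mem_powerset, mem_Icc]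
  exact ⟨fun h => h.2, fun h => ⟨h.1.trans h.2, h⟩⟩

theorem prod_mul_prod_sdiff_eq_prod_mul_prod_div {α K : Type*} [DecidableEq α]
    [CommGroupWithZero K] {T G : Finset α} (hT : T ⊆ G) (p : α → K) {q : α → K}
    (hq : ∀ e ∈ T, q e ≠ 0) :
    (∏ e ∈ T, p e) * ∏ e ∈ G \ T, q e = (∏ e ∈ G, q e) * ∏ e ∈ T, p e / q e := by
  calc (∏ e ∈ T, p e) * ∏ e ∈ G \ T, q e
      = (∏ e ∈ G \ T, q e) * ∏ e ∈ T, q e * (p e / q e) := by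
        rw [mul_comm, prod_congr rfl fun e he => mul_div_cancel₀ (p e) (hq e he)]
    _ = (∏ e ∈ G, q e) * ∏ e ∈ T, p e / q e := by
        rw [prod_mul_distrib, ← mul_assoc, prod_sdiff hT]

section SubsetCorank

variable {α R : Type*} [DecidableEq α] [CommRing R]

theorem charPoly_eq_SC (G : Finset α) (f : Finset α → ℕ) (s : ℕ) (l : R) :
    charPoly G f s l = SC G f s (fun _ => -1) l := by
  simp only [charPoly, SC, prod_const]

variable {G : Finset α} {f : Finset α → ℕ}

theorem SC_contract (hf : MonotoneOn f (Set.Iic G)) {T : Finset α} (hT : T ⊆ G)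
    (s : ℕ) (x : α → R) (l : R) :
    SC (G \ T) (fun A => f (A ∪ T) - f T) (s - f T) x l =
      ∑ B ∈ (G \ T).powerset, (∏ e ∈ B, x e) * l ^ (s - f (B ∪ T)) := by
  refine sum_congr rfl fun B hB => ?_
  have hBT : B ∪ T ⊆ G := union_subset ((mem_powerset.1 hB).trans sdiff_subset) hT
  rw [Nat.sub_sub_sub_cancel_right (hf hT hBT subset_union_right)]

theorem SC_add (hf : MonotoneOn f (Set.Iic G)) (s : ℕ) (x y : α → R) (l : R) :
    SC G f s (fun e => x e + y e) l =
      ∑ T ∈ G.powerset,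
        (∏ e ∈ T, x e) * SC (G \ T) (fun A => f (A ∪ T) - f T) (s - f T) y l := by
  symm
  calc ∑ T ∈ G.powerset,
        (∏ e ∈ T, x e) * SC (G \ T) (fun A => f (A ∪ T) - f T) (s - f T) y l
      = ∑ T ∈ G.powerset, ∑ B ∈ (G \ T).powerset,
          (∏ e ∈ T, x e) * ((∏ e ∈ B, y e) * l ^ (s - f (B ∪ T))) :=
        sum_congr rfl fun T hT => by rw [SC_contract hf (mem_powerset.1 hT), mul_sum]
    _ = ∑ A ∈ G.powerset, ∑ T ∈ A.powerset,
          (∏ e ∈ T, x e) * ((∏ e ∈ A \ T, y e) * l ^ (s - f (A \ T ∪ T))) :=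
        sum_powerset_sdiff_comm G _
    _ = ∑ A ∈ G.powerset, (∏ e ∈ A, (x e + y e)) * l ^ (s - f A) := by
        refine sum_congr rfl fun A _ => ?_
        rw [prod_add, sum_mul]
        refine sum_congr rfl fun T hT => ?_
        rw [sdiff_union_of_subset (mem_powerset.1 hT), mul_assoc]

end SubsetCorank

theorem sum_prod_mul_SC_contract {α K : Type*} [DecidableEq α] [Field K] {G : Finset α}
    {f : Finset α → ℕ} (hf : MonotoneOn f (Set.Iic G)) (s : ℕ) (p x : α → K) {q : α → K}
    (hq : ∀ e ∈ G, q e ≠ 0) (l : K) :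
    ∑ T ∈ G.powerset, (∏ e ∈ T, p e) * (∏ e ∈ G \ T, q e) *
        SC (G \ T) (fun A => f (A ∪ T) - f T) (s - f T) x l =
      (∏ e ∈ G, q e) * SC G f s (fun e => p e / q e + x e) l := by
  rw [SC_add hf, mul_sum]
  refine sum_congr rfl fun T hT => ?_
  rw [mem_powerset] at hT
  rw [prod_mul_prod_sdiff_eq_prod_mul_prod_div hT p fun e he => hq e (hT he), mul_assoc]

theorem expected_char_poly_random_contraction_general {α K : Type*} [DecidableEq α] [Field K]
    {G : Finset α} {f : Finset α → ℕ} (hf : MonotoneOn f (Set.Iic G)) {p : α → K}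
    (hp : ∀ e ∈ G, p e ≠ 1) (ξ : K) :
    ∑ T ∈ G.powerset, (∏ e ∈ T, p e) * (∏ e ∈ G \ T, (1 - p e)) *
        charPoly (G \ T) (fun A => f (A ∪ T) - f T) (f G - f T) ξ =
      (∏ e ∈ G, (1 - p e)) * SC G f (f G) (fun e => p e / (1 - p e) - 1) ξ := by
  have hq : ∀ e ∈ G, 1 - p e ≠ 0 := fun e he => sub_ne_zero.2 (hp e he).symm
  simp only [charPoly_eq_SC, sum_prod_mul_SC_contract hf _ p _ hq, sub_eq_add_neg _ (1 : K)]

/-- The expected value of the characteristic polynomial of a random contraction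
`M/T`, where each element `e` is put in `T` independently with probability `p e`,
equals `(∏_{e ∈ E} (1 - p e)) · SC(M; p/(1-p) - 1, ξ)`. -/
theorem expected_char_poly_random_contraction {α : Type*} [DecidableEq α]
    (M : FinMatroid α) (p : α → ℝ) (hp : ∀ e ∈ M.E, p e ≠ 1) (ξ : ℝ) :
    ∑ T ∈ M.E.powerset,
        (∏ e ∈ T, p e) * (∏ e ∈ M.E \ T, (1 - p e)) *
          charPoly (M.E \ T) (fun A => M.rk (A ∪ T) - M.rk T) (M.rk M.E - M.rk T) ξ =
      (∏ e ∈ M.E, (1 - p e)) *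
        SC M.E M.rk (M.rk M.E) (fun e => p e / (1 - p e) - 1) ξ := by
  exact expected_char_poly_random_contraction_general
    (fun _ _ _ hB hAB => M.rk_mono hAB hB) hp ξ
end

section
/- Let q be a prime power, let F be a finite field with q elements, let d ≥ 0, and let V = F^d (a finite set of q^d vectors). Then for all real (or commuting-variable) x and λ, ∑_{A ⊆ V} x^{|A|} · λ^{d − dim span(A)} = ∑_{j=0}^{d} g_j(d,q) · (x + 1)^{q^j} · ∏_{i=0}^{d−j−1} (λ − q^i), where dim span(A) is the dimension of the linear span of A in F^d and g_j(d,q) is the number of j-dimensional linear subspaces of F^d (the Gaussian binomial coefficient binom(d,j)_q). In matroid language, this computes the size-corank polynomial SC(GF(q)^d; x, λ) of the matroid of all vectors of GF(q)^d. -/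
open Finset Classical

/-!
Sort the linear maps `V → F ^ m` by their kernel `W`. Those with kernel `W` correspond to the
injective linear maps `V ⧸ W → F ^ m`, so `∑ W, ∏ i < codim W, (q ^ m - q ^ i) = q ^ (m * dim V)`,
where `q = #F`.
Both sides are polynomials in `q ^ m`, and `m` is arbitrary; hence `q ^ m` may be replaced by any
`l`. Applied to `V ⧸ span A`, this writes `l ^ corank A` as a sum over the subspaces containing `A`.
After exchanging the two summations, the subsets of each subspace `W` contribute `(x + 1) ^ #W`.
-/

open Module

lemma injective_basis_constr_iff {ι R M N : Type*} [Semiring R] [AddCommMonoid M] [Module R M]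
    [AddCommMonoid N] [Module R N] (b : Basis ι R M) (s : ι → N) :
    Function.Injective (b.constr ℕ s) ↔ LinearIndependent R s := by
  have h : b.constr ℕ s = Finsupp.linearCombination R s ∘ₗ b.repr.toLinearMap := by
    refine b.ext fun i ↦ ?_
    simp
  rw [h]
  exact EquivLike.injective_comp b.repr (Finsupp.linearCombination R s)

section LinearMaps

variable {R V M : Type*} [Ring R] [AddCommGroup V] [Module R V] [AddCommGroup M] [Module R M]

/-- Linear maps with kernel `W`, regarded as injective linear maps out of the quotient by `W`. -/
def kerEqEquivInjective (W : Submodule R V) :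
    {f : V →ₗ[R] M // f.ker = W} ≃ {g : (V ⧸ W) →ₗ[R] M // Function.Injective g} where
  toFun f := ⟨W.liftQ f.1 f.2.ge, LinearMap.ker_eq_bot.1 (W.ker_liftQ_eq_bot _ _ f.2.le)⟩
  invFun g := ⟨g.1 ∘ₗ W.mkQ, by
    rw [LinearMap.ker_comp_of_ker_eq_bot _ (LinearMap.ker_eq_bot.2 g.2), W.ker_mkQ]⟩
  left_inv f := Subtype.ext (W.liftQ_mkQ f.1 f.2.ge)
  right_inv g := by ext; simp

lemma natCard_linearMap_eq_sum_natCard_injective [Fintype (Submodule R V)]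
    [Finite (V →ₗ[R] M)] :
    Nat.card (V →ₗ[R] M) =
      ∑ W : Submodule R V, Nat.card {g : (V ⧸ W) →ₗ[R] M // Function.Injective g} := by
  calc Nat.card (V →ₗ[R] M)
      = Nat.card (Σ W : Submodule R V, {f : V →ₗ[R] M // f.ker = W}) :=
        Nat.card_congr (Equiv.sigmaFiberEquiv LinearMap.ker).symm
    _ = ∑ W : Submodule R V, Nat.card {f : V →ₗ[R] M // f.ker = W} := Nat.card_sigma
    _ = ∑ W : Submodule R V, Nat.card {g : (V ⧸ W) →ₗ[R] M // Function.Injective g} :=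
        Finset.sum_congr rfl fun W _ ↦ Nat.card_congr (kerEqEquivInjective W)

end LinearMaps

section Counting

variable {F M : Type*} [Fintype F] [AddCommGroup M] [Finite M]

lemma natCard_linearIndependent_eq_prod [DivisionRing F] [Module F M] (n : ℕ) :
    (Nat.card {s : Fin n → M // LinearIndependent F s} : ℤ) =
      ∏ i ∈ range n, ((Fintype.card F : ℤ) ^ finrank F M - (Fintype.card F : ℤ) ^ i) := by
  by_cases hn : n ≤ finrank F M
  · rw [card_linearIndependent hn, ← Fin.prod_univ_eq_prod_range
      (fun i ↦ (Fintype.card F : ℤ) ^ finrank F M - (Fintype.card F : ℤ) ^ i), Nat.cast_prod]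
    refine Finset.prod_congr rfl fun i _ ↦ ?_
    rw [Nat.cast_sub (Nat.pow_le_pow_right Fintype.card_pos (i.isLt.le.trans hn)),
      Nat.cast_pow, Nat.cast_pow]
  · have : IsEmpty {s : Fin n → M // LinearIndependent F s} :=
      ⟨fun s ↦ hn (by simpa using s.2.fintype_card_le_finrank)⟩
    rw [Nat.card_of_isEmpty, Nat.cast_zero,
      Finset.prod_eq_zero (mem_range.2 (not_le.1 hn)) (sub_self _)]

lemma natCard_injective_linearMap_eq_prod [DivisionRing F] [Module F M] (E : Type*)
    [AddCommGroup E] [Module F E] [Module.Finite F E] :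
    (Nat.card {g : E →ₗ[F] M // Function.Injective g} : ℤ) =
      ∏ i ∈ range (finrank F E),
        ((Fintype.card F : ℤ) ^ finrank F M - (Fintype.card F : ℤ) ^ i) := by
  have e : {s : Fin (finrank F E) → M // LinearIndependent F s} ≃
      {g : E →ₗ[F] M // Function.Injective g} :=
    ((finBasis F E).constr ℕ).toEquiv.subtypeEquiv fun s ↦
      (injective_basis_constr_iff (finBasis F E) s).symm
  rw [← Nat.card_congr e, natCard_linearIndependent_eq_prod]

end Counting

section SumOverSubspaces

variable {F V : Type*} [Field F] [Fintype F] [AddCommGroup V] [Module F V] [Fintype V]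

lemma sum_submodule_prod_pow_sub_pow (m : ℕ) :
    ∑ W : Submodule F V, ∏ i ∈ range (finrank F (V ⧸ W)),
        ((Fintype.card F : ℤ) ^ m - (Fintype.card F : ℤ) ^ i) =
      ((Fintype.card F : ℤ) ^ m) ^ finrank F V := by
  have : Finite (V →ₗ[F] (Fin m → F)) := DFunLike.finite _
  have hcard : Nat.card (V →ₗ[F] (Fin m → F)) = (Fintype.card F ^ m) ^ finrank F V := by
    rw [natCard_eq_pow_finrank (K := F), finrank_linearMap, finrank_fin_fun,
      Nat.card_eq_fintype_card, ← pow_mul, mul_comm m]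
  have hsum := natCard_linearMap_eq_sum_natCard_injective (R := F) (V := V) (M := Fin m → F)
  rw [hcard] at hsum
  zify at hsum
  simpa only [natCard_injective_linearMap_eq_prod, finrank_fin_fun] using hsum.symm

variable {R : Type*} [CommRing R]

lemma sum_submodule_prod_sub_pow (l : R) :
    ∑ W : Submodule F V, ∏ i ∈ range (finrank F (V ⧸ W)), (l - (Fintype.card F : R) ^ i) =
      l ^ finrank F V := by
  have hpoly : ∑ W : Submodule F V, ∏ i ∈ range (finrank F (V ⧸ W)),
        (Polynomial.X - (Fintype.card F : Polynomial ℤ) ^ i) =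
      Polynomial.X ^ finrank F V := by
    have hinj : Function.Injective fun m : ℕ ↦ (Fintype.card F : ℤ) ^ m :=
      pow_right_injective₀ (mod_cast Fintype.card_pos) (mod_cast Fintype.one_lt_card.ne')
    refine Polynomial.eq_of_infinite_eval_eq _ _
      ((Set.infinite_range_of_injective hinj).mono ?_)
    rintro _ ⟨m, rfl⟩
    simpa [Polynomial.eval_finsetSum, Polynomial.eval_prod]
      using sum_submodule_prod_pow_sub_pow (F := F) (V := V) m
  simpa using congrArg (Polynomial.aeval l) hpoly

lemma sum_submodule_ge_prod_sub_pow (U : Submodule F V) (l : R) :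
    ∑ W : Submodule F V with U ≤ W,
        ∏ i ∈ range (finrank F (V ⧸ W)), (l - (Fintype.card F : R) ^ i) =
      l ^ finrank F (V ⧸ U) := by
  have hrank (W : Set.Ici U) :
      finrank F ((V ⧸ U) ⧸ W.1.map U.mkQ) = finrank F (V ⧸ W.1) :=
    (U.quotientQuotientEquivQuotient W.1 W.2).finrank_eq
  rw [← sum_submodule_prod_sub_pow (F := F) (V := V ⧸ U) l,
    Finset.sum_subtype (p := (· ∈ Set.Ici U)) _ (by simp)]
  refine Fintype.sum_equiv U.comapMkQRelIso.symm.toEquiv _ _ fun W ↦ ?_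
  rw [← hrank W]
  rfl

end SumOverSubspaces

lemma sum_pow_card_span_le {K V R : Type*} [Semiring K] [AddCommMonoid V] [Module K V] [Fintype V]
    [CommSemiring R] (W : Submodule K V) (x : R) :
    ∑ A ∈ {A : Finset V | Submodule.span K (A : Set V) ≤ W}, x ^ #A = (x + 1) ^ Nat.card W := by
  have hfilter : ({A | Submodule.span K (A : Set V) ≤ W} : Finset (Finset V)) =
      (W : Set V).toFinset.powerset := by
    ext A
    simp [Submodule.span_le, ← Finset.coe_subset]
  have hcard : Nat.card W = #(W : Set V).toFinset := by
    rw [Set.toFinset_card, ← Nat.card_eq_fintype_card, SetLike.coe_sort_coe]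
  rw [hfilter, hcard, ← Finset.sum_pow_mul_eq_add_pow]
  simp only [one_pow, mul_one]

lemma sum_submodule_eq_sum_finrank {K V R : Type*} [Semiring K] [StrongRankCondition K]
    [AddCommMonoid V] [Module K V] [Module.Finite K V] [Fintype (Submodule K V)] [Semiring R]
    (f : ℕ → R) :
    ∑ W : Submodule K V, f (finrank K W) =
      ∑ j ∈ range (finrank K V + 1),
        (Nat.card {W : Submodule K V // finrank K W = j} : R) * f j := by
  rw [← Finset.sum_fiberwise_of_maps_to' (t := range (finrank K V + 1))
    (fun W _ ↦ mem_range_succ_iff.2 W.finrank_le) f]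
  refine Finset.sum_congr rfl fun j _ ↦ ?_
  rw [Finset.sum_const, nsmul_eq_mul, Nat.card_eq_fintype_card, Fintype.card_subtype]

theorem size_corank_vector_space_general {F V R : Type*} [Field F] [Fintype F] [AddCommGroup V]
    [Module F V] [Fintype V] [CommRing R] (x l : R) :
    ∑ A : Finset V, x ^ #A * l ^ (finrank F V - finrank F (Submodule.span F (A : Set V))) =
      ∑ j ∈ range (finrank F V + 1),
        (Nat.card {W : Submodule F V // finrank F W = j} : R) *
          (x + 1) ^ Fintype.card F ^ j *
            ∏ i ∈ range (finrank F V - j), (l - (Fintype.card F : R) ^ i) := by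
  let P (n : ℕ) : R := ∏ i ∈ range n, (l - (Fintype.card F : R) ^ i)
  calc ∑ A : Finset V, x ^ #A * l ^ (finrank F V - finrank F (Submodule.span F (A : Set V)))
      = ∑ A : Finset V, x ^ #A * ∑ W : Submodule F V with Submodule.span F (A : Set V) ≤ W,
          P (finrank F (V ⧸ W)) := by
        simp only [P, sum_submodule_ge_prod_sub_pow]
        simp only [Submodule.finrank_quotient]
    _ = ∑ W : Submodule F V, (∑ A ∈ {A : Finset V | Submodule.span F (A : Set V) ≤ W}, x ^ #A) *
          P (finrank F (V ⧸ W)) := by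
        simp only [Finset.mul_sum, Finset.sum_mul]
        exact Finset.sum_comm' (by simp)
    _ = ∑ W : Submodule F V,
          (x + 1) ^ Fintype.card F ^ finrank F W * P (finrank F V - finrank F W) := by
        refine Finset.sum_congr rfl fun W _ ↦ ?_
        rw [sum_pow_card_span_le, natCard_eq_pow_finrank (K := F), Nat.card_eq_fintype_card,
          Submodule.finrank_quotient]
    _ = _ := by
        simp only [mul_assoc]
        exact sum_submodule_eq_sum_finrank fun j ↦
          (x + 1) ^ Fintype.card F ^ j * P (finrank F V - j)

/-- The size-corank polynomial of the matroid `GF(q)^d` of all vectors of a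
`d`-dimensional vector space over a field with `q` elements, expressed as a sum over
dimensions of subspaces, with `g_j(d,q)` the number of `j`-dimensional subspaces. -/
theorem size_corank_vector_space (q : ℕ) (hq : IsPrimePow q) (F : Type*) [Field F]
    [Fintype F] (hF : Fintype.card F = q) (d : ℕ) (x l : ℝ) :
    ∑ A ∈ (Finset.univ : Finset (Fin d → F)).powerset,
        x ^ A.card *
          l ^ (d - Module.finrank F (Submodule.span F (A : Set (Fin d → F)))) =
      ∑ j ∈ Finset.range (d + 1),
        (Nat.card {W : Submodule F (Fin d → F) // Module.finrank F W = j} : ℝ) *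
          (x + 1) ^ q ^ j * ∏ i ∈ Finset.range (d - j), (l - (q : ℝ) ^ i) := by
  simpa only [Finset.powerset_univ, finrank_fin_fun, hF] using
    size_corank_vector_space_general (F := F) (V := Fin d → F) x l
end

section
/- Let q be a prime power, let F be a finite field with q elements, let d ≥ 0, and let V = F^d. Then for every real number p, ∑_{A ⊆ V, span(A) = F^d} p^{|A|} = ∑_{k=0}^{d} (−1)^k · g_k(d,q) · q^{k(k−1)/2} · (1 + p)^{q^{d−k}}, where the left-hand sum ranges over all subsets A of F^d whose linear span is all of F^d, and g_k(d,q) is the number of k-dimensional linear subspaces of F^d. In particular, for 0 ≤ p ≤ 1 this is the expected number of spanning subsets contained in a random subset of F^d obtained by including each vector independently with probability p. -/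
open Finset Classical

/-!
Rota's Möbius inversion on the lattice of subspaces. Over the field with `q` elements, put
`μ(U) = (-1)^k q^(k choose 2)` for `k = dim U`. If `L` is a line in `T`, every `W ≤ T` containing
`L` has `q^(dim W - 1)` subspaces complementary to `L` in `W`, and their `μ`-values cancel `μ(W)`;
hence `μ` sums to `0` over the subspaces of a nonzero space `T`.

Take for `T` the annihilator of `span A` in the dual of `V`: it is zero exactly when `A` spans, and
it contains `U` exactly when `A` lies in the common kernel of the functionals in `U`. Hence the sum
of `p^|A|` over the spanning sets `A` is `∑ U, μ(U) ∑_{A ⊆ U.dualCoannihilator} p^|A|`. For `U` of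
dimension `k` the common kernel has `q^(dim V - k)` vectors, so its subsets contribute
`(1 + p)^(q^(dim V - k))`.
-/

section Counting

theorem natCard_submodule_finrank_eq_congr {R M N : Type*} [Semiring R] [AddCommMonoid M]
    [Module R M] [AddCommMonoid N] [Module R N] (e : M ≃ₗ[R] N) (k : ℕ) :
    Nat.card {U : Submodule R M // Module.finrank R U = k} =
      Nat.card {U : Submodule R N // Module.finrank R U = k} :=
  Nat.card_congr <| (Submodule.orderIsoMapComap e).toEquiv.subtypeEquiv fun U => by
    rw [← e.finrank_map_eq U]
    rfl

theorem sum_submodule_comp_finrank {R M G : Type*} [Semiring R] [StrongRankCondition R]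
    [AddCommMonoid M] [Module R M] [Module.Finite R M] [Fintype (Submodule R M)] [AddCommMonoid G]
    (g : ℕ → G) :
    ∑ U : Submodule R M, g (Module.finrank R U) =
      ∑ k ∈ range (Module.finrank R M + 1),
        Nat.card {U : Submodule R M // Module.finrank R U = k} • g k := by
  have finrank_mem (U : Submodule R M) (_ : U ∈ univ) :
      Module.finrank R U ∈ range (Module.finrank R M + 1) :=
    mem_range_succ_iff.2 U.finrank_le
  rw [← sum_fiberwise_of_maps_to finrank_mem]
  refine sum_congr rfl fun k _ => ?_
  rw [Nat.subtype_card {U : Submodule R M | Module.finrank R U = k} (by simp)]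
  exact sum_eq_card_nsmul fun U hU => congrArg g (mem_filter.1 hU).2

theorem sum_pow_card_subset {α R : Type*} [Fintype α] [CommSemiring R] (s : Set α) (p : R) :
    ∑ A ∈ {A : Finset α | (A : Set α) ⊆ s}, p ^ #A = (1 + p) ^ Nat.card s := by
  simp_rw [← Set.subset_toFinset]
  rw [filter_subset_univ, Nat.card_eq_fintype_card, ← Set.toFinset_card]
  simpa [add_comm] using sum_pow_mul_eq_add_pow p 1 s.toFinset

end Counting

section Complements

variable {F V : Type*} [Field F] [AddCommGroup V] [Module F V] [FiniteDimensional F V]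

theorem natCard_isCompl (L : Submodule F V) :
    Nat.card {U : Submodule F V // IsCompl L U} =
      Nat.card F ^ ((Module.finrank F V - Module.finrank F L) * Module.finrank F L) := by
  obtain ⟨C, hC⟩ := L.exists_isCompl
  obtain ⟨π, hπ⟩ := L.isComplEquivProj ⟨C, hC⟩
  -- The projections onto `L` form a torsor under the maps `V → L` that vanish on `L`.
  let projectionsEquiv : {f : V →ₗ[F] L // ∀ x : L, f x = x} ≃ (V ⧸ L →ₗ[F] L) :=
    { toFun f := L.liftQ (f.1 - π) fun x hx => by
        simp [f.2 ⟨x, hx⟩, hπ ⟨x, hx⟩]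
      invFun g := ⟨g ∘ₗ L.mkQ + π, fun x => by
        simp [hπ, (Submodule.Quotient.mk_eq_zero L).2 x.2]⟩
      left_inv f := by ext; simp
      right_inv g := by ext; simp }
  rw [Nat.card_congr (L.isComplEquivProj.trans projectionsEquiv),
    Module.natCard_eq_pow_finrank (K := F), Module.finrank_linearMap, L.finrank_quotient]

theorem natCard_disjoint_sup_eq {L W : Submodule F V} (hLW : L ≤ W) :
    Nat.card {U : Submodule F V // Disjoint L U ∧ L ⊔ U = W} =
      Nat.card F ^ ((Module.finrank F W - Module.finrank F L) * Module.finrank F L) := by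
  have mapIic_submoduleOf : W.mapIic (L.submoduleOf W) = ⟨L, hLW⟩ := by
    ext1
    simp [Submodule.submoduleOf, hLW]
  calc Nat.card {U : Submodule F V // Disjoint L U ∧ L ⊔ U = W}
      = Nat.card {U : Set.Iic W // Disjoint L U.1 ∧ L ⊔ U.1 = W} :=
        (Nat.card_congr <| Equiv.subtypeSubtypeEquivSubtype
          (p := (· ≤ W)) (q := fun U => Disjoint L U ∧ L ⊔ U = W) fun hU =>
            le_sup_right.trans_eq hU.2).symm
    _ = Nat.card {U : Submodule F W // IsCompl (L.submoduleOf W) U} :=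
        (Nat.card_congr <| W.mapIic.toEquiv.subtypeEquiv fun U => by
          rw [W.mapIic.isCompl_iff, mapIic_submoduleOf, Set.Iic.isCompl_iff]
          rfl).symm
    _ = Nat.card F ^ ((Module.finrank F W - Module.finrank F L) * Module.finrank F L) := by
        rw [natCard_isCompl, (Submodule.submoduleOfEquivOfLe hLW).finrank_eq]

end Complements

section Moebius

variable {F V : Type*} [Field F] [AddCommGroup V] [Module F V]

/-- The value `μ(0, U)` of the Möbius function of the lattice of subspaces of a vector space over a
finite field, given by Rota's closed formula `(-1)^k q^(k choose 2)` for `k = dim U`. -/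
noncomputable def subspaceMoebius (U : Submodule F V) : ℤ :=
  (-1) ^ Module.finrank F U * (Nat.card F : ℤ) ^ (Module.finrank F U).choose 2

variable [FiniteDimensional F V] [Fintype (Submodule F V)]

theorem sum_subspaceMoebius_disjoint_sup_eq {L W : Submodule F V} (hL : IsAtom L) (hLW : L ≤ W) :
    ∑ U : Submodule F V with Disjoint L U ∧ L ⊔ U = W, subspaceMoebius U =
      -subspaceMoebius W := by
  have finrank_L : Module.finrank F L = 1 :=
    isSimpleModule_iff_finrank_eq_one.1 (isSimpleModule_iff_isAtom.2 hL)
  obtain ⟨k, hk⟩ : ∃ k, Module.finrank F W = k + 1 :=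
    Nat.exists_eq_add_of_le' (finrank_L ▸ Submodule.finrank_mono hLW)
  have finrank_complement {U : Submodule F V} (hU : Disjoint L U ∧ L ⊔ U = W) :
      Module.finrank F U = k := by
    have := Submodule.finrank_sup_add_finrank_inf_eq L U
    rw [hU.1.eq_bot, hU.2, finrank_bot, finrank_L, hk] at this
    omega
  calc ∑ U : Submodule F V with Disjoint L U ∧ L ⊔ U = W, subspaceMoebius U
      = #{U : Submodule F V | Disjoint L U ∧ L ⊔ U = W} •
          ((-1) ^ k * (Nat.card F : ℤ) ^ k.choose 2) :=
        sum_eq_card_nsmul fun U hU => by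
          rw [subspaceMoebius, finrank_complement (mem_filter.1 hU).2]
    _ = (Nat.card F : ℤ) ^ k * ((-1) ^ k * (Nat.card F : ℤ) ^ k.choose 2) := by
        rw [← Nat.subtype_card _ fun _ => mem_filter_univ _, natCard_disjoint_sup_eq hLW,
          finrank_L, hk, Nat.add_sub_cancel, mul_one, nsmul_eq_mul, Nat.cast_pow]
    _ = -subspaceMoebius W := by
        rw [subspaceMoebius, hk, Nat.choose_succ_succ' k 1, Nat.choose_one_right]
        ring

theorem sum_subspaceMoebius_le (T : Submodule F V) :
    ∑ U : Submodule F V with U ≤ T, subspaceMoebius U = if T = ⊥ then 1 else 0 := by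
  obtain rfl | ⟨L, hL, hLT⟩ := eq_bot_or_exists_atom_le T
  · simp [subspaceMoebius, filter_eq']
  have sup_mem (U : Submodule F V) (hU : U ∈ ({U | U ≤ T ∧ ¬L ≤ U} : Finset _)) :
      L ⊔ U ∈ ({W | W ≤ T ∧ L ≤ W} : Finset _) := by
    simp_all
  have fiber_eq {W : Submodule F V} (hW : W ≤ T) :
      ({U ∈ ({U | U ≤ T ∧ ¬L ≤ U} : Finset (Submodule F V)) | L ⊔ U = W} : Finset _) =
        ({U | Disjoint L U ∧ L ⊔ U = W} : Finset _) := by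
    ext U
    simp only [mem_filter, mem_univ, true_and, hL.not_le_iff_disjoint]
    exact ⟨fun h => ⟨h.1.2, h.2⟩, fun h => ⟨⟨(le_sup_right.trans_eq h.2).trans hW, h.1⟩, h.2⟩⟩
  have sum_not_le : ∑ U : Submodule F V with U ≤ T ∧ ¬L ≤ U, subspaceMoebius U =
      -∑ W : Submodule F V with W ≤ T ∧ L ≤ W, subspaceMoebius W := by
    rw [← sum_fiberwise_of_maps_to sup_mem, ← sum_neg_distrib]
    refine sum_congr rfl fun W hW => ?_
    obtain ⟨hWT, hLW⟩ := (mem_filter_univ W).1 hW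
    rw [fiber_eq hWT, sum_subspaceMoebius_disjoint_sup_eq hL hLW]
  rw [if_neg (ne_bot_of_le_ne_bot hL.1 hLT), ← sum_filter_add_sum_filter_not _ (L ≤ ·),
    filter_filter, filter_filter, sum_not_le, add_neg_cancel]

end Moebius

section Spanning

variable {F V : Type*} [Field F] [AddCommGroup V] [Module F V]

theorem natCard_dualCoannihilator [FiniteDimensional F V] (U : Submodule F (Module.Dual F V)) :
    Nat.card U.dualCoannihilator =
      Nat.card F ^ (Module.finrank F V - Module.finrank F U) := by
  rw [Module.natCard_eq_pow_finrank (K := F),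
    ← Subspace.finrank_add_finrank_dualCoannihilator_eq U, Nat.add_sub_cancel_left]

variable [Fintype V]

theorem sum_spanning_eq_sum_subspaceMoebius [Fintype (Submodule F (Module.Dual F V))]
    {G : Type*} [AddCommGroup G] (f : Finset V → G) :
    ∑ A ∈ {A : Finset V | Submodule.span F (A : Set V) = ⊤}, f A =
      ∑ U : Submodule F (Module.Dual F V), subspaceMoebius U •
        ∑ A ∈ {A : Finset V | (A : Set V) ⊆ U.dualCoannihilator}, f A := by
  have sum_moebius (A : Finset V) :
      ∑ U : Submodule F (Module.Dual F V) with (A : Set V) ⊆ U.dualCoannihilator,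
        subspaceMoebius U = if Submodule.span F (A : Set V) = ⊤ then 1 else 0 := by
    simpa only [Submodule.le_dualAnnihilator_iff_le_dualCoannihilator, Submodule.span_le,
      Submodule.dualAnnihilator_eq_bot_iff] using
      sum_subspaceMoebius_le (Submodule.span F (A : Set V)).dualAnnihilator
  calc ∑ A ∈ {A : Finset V | Submodule.span F (A : Set V) = ⊤}, f A
      = ∑ A : Finset V, (∑ U : Submodule F (Module.Dual F V)
          with (A : Set V) ⊆ U.dualCoannihilator, subspaceMoebius U) • f A := by
        simp only [sum_moebius, ite_smul, one_smul, zero_smul, sum_filter]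
    _ = ∑ U : Submodule F (Module.Dual F V), subspaceMoebius U •
          ∑ A ∈ {A : Finset V | (A : Set V) ⊆ U.dualCoannihilator}, f A := by
        simp only [sum_smul, smul_sum]
        exact sum_comm' (by simp)

theorem expected_spanning_subsets_general {R : Type*} [CommRing R] (p : R) :
    ∑ A ∈ {A : Finset V | Submodule.span F (A : Set V) = ⊤}, p ^ #A =
      ∑ k ∈ range (Module.finrank F V + 1),
        (-1 : R) ^ k * (Nat.card {W : Submodule F V // Module.finrank F W = k} : R) *
          (Nat.card F : R) ^ k.choose 2 * (1 + p) ^ Nat.card F ^ (Module.finrank F V - k) := by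
  have : Fintype (Submodule F (Module.Dual F V)) :=
    Fintype.ofEquiv _ (Subspace.orderIsoFiniteDimensional (K := F) (V := V)).toEquiv
  let e : V ≃ₗ[F] Module.Dual F V := .ofFinrankEq _ _ Subspace.dual_finrank_eq.symm
  let term (k : ℕ) : R :=
    (-1) ^ k * (Nat.card F : R) ^ k.choose 2 * (1 + p) ^ Nat.card F ^ (Module.finrank F V - k)
  calc ∑ A ∈ {A : Finset V | Submodule.span F (A : Set V) = ⊤}, p ^ #A
      = ∑ U : Submodule F (Module.Dual F V), term (Module.finrank F U) := by
        rw [sum_spanning_eq_sum_subspaceMoebius]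
        refine sum_congr rfl fun U _ => ?_
        rw [sum_pow_card_subset, SetLike.coe_sort_coe, natCard_dualCoannihilator, zsmul_eq_mul]
        simp [term, subspaceMoebius]
    _ = ∑ k ∈ range (Module.finrank F V + 1),
          Nat.card {W : Submodule F V // Module.finrank F W = k} • term k := by
        simp only [sum_submodule_comp_finrank, Subspace.dual_finrank_eq,
          natCard_submodule_finrank_eq_congr e]
    _ = _ := sum_congr rfl fun k _ => by
        rw [nsmul_eq_mul]
        ring

end Spanning

/-- The expected number of spanning subsets of a random subset of `F^d` (each vector
included independently with probability `p`), i.e. the generating function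
`∑ p^{|A|}` over spanning sets `A`, equals
`∑_{k=0}^d (-1)^k g_k(d,q) q^{binom(k,2)} (1+p)^{q^{d-k}}`, where `g_k(d,q)` is the
number of `k`-dimensional subspaces of `F^d`. -/
theorem expected_spanning_subsets (q : ℕ) (hq : IsPrimePow q) (F : Type*) [Field F]
    [Fintype F] (hF : Fintype.card F = q) (d : ℕ) (p : ℝ) :
    ∑ A ∈ (Finset.univ : Finset (Fin d → F)).powerset.filter
        (fun A : Finset (Fin d → F) => Submodule.span F (A : Set (Fin d → F)) = ⊤),
        p ^ A.card =
      ∑ k ∈ Finset.range (d + 1),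
        (-1 : ℝ) ^ k *
          (Nat.card {W : Submodule F (Fin d → F) // Module.finrank F W = k} : ℝ) *
          (q : ℝ) ^ k.choose 2 * (1 + p) ^ q ^ (d - k) := by
  simpa only [powerset_univ, Module.finrank_fin_fun, Nat.card_eq_fintype_card, hF] using
    expected_spanning_subsets_general (F := F) (V := Fin d → F) p
end
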